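/- Fix T > 0, α ∈ (0,1), and constants M₁, M₂, M₃ > 0. There exists C > 0 depending only on T, α, M₁, M₂, M₃ such that the following holds. Let c : ℝ → ℝ be smooth with M₁⁻¹ ≤ c ≤ M₁ and |c′| ≤ M₁; let β : ℝ² → ℝ be smooth with sup_x ∫_ℝ (|β(x,y)| + |∂ₓβ(x,y)| + |∂ₓₓβ(x,y)|) dy ≤ M₂ and with ∫∫_{ℝ²} (|A₀[β(·,y)](x)| + |A₀[∂ₓβ(·,y)](x)| + |A₀[∂ₓₓβ(·,y)](x)|) dx dy ≤ M₂, where A₀ acts on the first variable; set B(x;v) = ∫_ℝ β(x,y)v(y) dy. Let u : [0,∞) × ℝ → ℝ be a smooth function such that, for every t ≥ 0, u(t,·) is non-decreasing and bounded with lim_{x→−∞} u(t,x) = 0 and lim_{x→+∞} u(t,x) = 1, ∂ₓu(t,·) is a Schwartz function depending continuously on t, the C^{1,α} norm of u(0,·) is at most M₃, and u solves ∂ₜu + c(x)∂ₓu·A₀[u(t,·)] + B(x;u(t,·))∂ₓu = 0 pointwise on (0,∞) × ℝ. Then |∂ₜu(t,x)| ≤ C for all (t,x) ∈ [0,T] ×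 ℝ. -/

import Mathlib

open MeasureTheory Filter Set
open scoped Topology

/-- Truncated half-Laplacian: `∫_{|x−y|≥δ} (u(x)−u(y))/(x−y)² dy`. -/
noncomputable def Apos (δ : ℝ) (u : ℝ → ℝ) (x : ℝ) : ℝ :=
  ∫ y in {y : ℝ | δ ≤ |x - y|}, (u x - u y) / (x - y) ^ 2

/-- The half-Laplacian `A₀[u](x) = p.v. ∫ (u(x)−u(y))/(x−y)² dy`. -/
noncomputable def A0 (u : ℝ → ℝ) (x : ℝ) : ℝ :=
  limUnder (𝓝[>] (0 : ℝ)) (fun δ => Apos δ u x)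

/-- The nonlocal drift `B(x;v) = ∫ β(x,y) v(y) dy`. -/
noncomputable def Bop (β : ℝ → ℝ → ℝ) (x : ℝ) (v : ℝ → ℝ) : ℝ :=
  ∫ y : ℝ, β x y * v y

/-!
On smooth bounded profiles `A₀` is an absolutely convergent integral of second differences, so it
satisfies a maximum principle. Differentiating the equation at a spatial maximum of `∂ₓu`, the only
term without a sign is `c' A₀[u]`; splitting its integral at a small radius and integrating by parts
on the inner part bounds it by a small multiple of `A₀[∂ₓu]`, which `c A₀[∂ₓu]` absorbs, plus a
constant. Hence `‖∂ₓu(t)‖∞` grows at most exponentially. Where `|u(t + h) - u(t)|` is maximal, the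
slopes of `u(t + h)` and `u(t)` agree, so the difference of the two equations gives
`‖u(t + h) - u(t)‖∞ ≤ e^{Kt} ‖u(h) - u(0)‖∞`. Finally `‖u(h) - u(0)‖∞ = O(h)`, since `A₀[u(s)]` is
bounded for small `s` in terms of the Hölder norm of `∂ₓu(0)`; now divide by `h` and let `h → 0`.
-/

open scoped SchwartzMap

section SecondDifference

/-- The symmetric second difference of `f` at `x` with increment `z`, signed so that it is
nonnegative when `x` is a maximum point. -/
def secondDiff (f : ℝ → ℝ) (x z : ℝ) : ℝ := 2 * f x - f (x + z) - f (x - z)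

variable {f f' : ℝ → ℝ}

lemma secondDiff_zero (f : ℝ → ℝ) (x : ℝ) : secondDiff f x 0 = 0 := by
  simp only [secondDiff, add_zero, sub_zero]
  ring

lemma secondDiff_abs (f : ℝ → ℝ) (x z : ℝ) : secondDiff f x |z| = secondDiff f x z := by
  rcases abs_choice z with h | h <;> rw [h]
  simp only [secondDiff, sub_neg_eq_add, ← sub_eq_add_neg]
  ring

lemma continuous_secondDiff (hf : Continuous f) (x : ℝ) : Continuous (secondDiff f x) := by
  unfold secondDiff
  fun_prop

lemma hasDerivAt_secondDiff (hf : ∀ x, HasDerivAt f (f' x) x) (x z : ℝ) :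
    HasDerivAt (secondDiff f x) (f' (x - z) - f' (x + z)) z := by
  have h := (((hf (x + z)).comp_const_add x z).const_sub (2 * f x)).sub
    ((hf (x - z)).comp_const_sub x z)
  exact h.congr_deriv (by ring)

lemma secondDiff_nonneg_of_forall_le {x : ℝ} (h : ∀ y, f y ≤ f x) (z : ℝ) :
    0 ≤ secondDiff f x z := by
  unfold secondDiff
  linarith [h (x + z), h (x - z)]

lemma abs_secondDiff_le_four_mul {M : ℝ} (hf : ∀ x, |f x| ≤ M) (x z : ℝ) :
    |secondDiff f x z| ≤ 4 * M := by
  have hx := abs_le.1 (hf x)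
  have hadd := abs_le.1 (hf (x + z))
  have hsub := abs_le.1 (hf (x - z))
  rw [secondDiff, abs_le]
  constructor <;> linarith

lemma abs_secondDiff_le_of_holder {H α : ℝ} (hα : 0 ≤ α) (hf : ∀ x, HasDerivAt f (f' x) x)
    (hf' : ∀ x y, |f' x - f' y| ≤ H * |x - y| ^ α) (x z : ℝ) :
    |secondDiff f x z| ≤ H * (2 * |z|) ^ α * |z| := by
  have hH : 0 ≤ H := by simpa using (abs_nonneg _).trans (hf' 1 0)
  have hderiv : ∀ r ∈ Icc 0 |z|, ‖f' (x - r) - f' (x + r)‖ ≤ H * (2 * |z|) ^ α := by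
    intro r hr
    refine (hf' _ _).trans ?_
    rw [show x - r - (x + r) = -(2 * r) by ring, abs_neg,
      abs_of_nonneg (mul_nonneg zero_le_two hr.1)]
    gcongr
    · exact mul_nonneg zero_le_two hr.1
    · exact hr.2
  have hmvt := (convex_Icc 0 |z|).norm_image_sub_le_of_norm_hasDerivWithin_le
    (fun r _ => (hasDerivAt_secondDiff hf x r).hasDerivWithinAt) hderiv
    (left_mem_Icc.2 (abs_nonneg z)) (right_mem_Icc.2 (abs_nonneg z))
  rwa [secondDiff_zero, sub_zero, sub_zero, secondDiff_abs, Real.norm_eq_abs, Real.norm_eq_abs,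
    abs_abs] at hmvt

end SecondDifference

/-- Bounded functions of class `C^{1,1}`, characterised by second differences of order `z²`. For
these the integral of second differences against `z⁻²` converges absolutely. -/
structure BoundedC11 (f : ℝ → ℝ) : Prop where
  continuous : Continuous f
  bounded : ∃ M, ∀ x, |f x| ≤ M
  secondDiff_le : ∃ L, ∀ x z, |secondDiff f x z| ≤ L * z ^ 2

namespace BoundedC11

variable {f f' : ℝ → ℝ}

lemma of_hasDerivAt {M L : ℝ} (hf : ∀ x, HasDerivAt f (f' x) x) (hM : ∀ x, |f x| ≤ M)
    (hL : ∀ x y, |f' x - f' y| ≤ L * |x - y|) : BoundedC11 f where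
  continuous := continuous_iff_continuousAt.2 fun x => (hf x).continuousAt
  bounded := ⟨M, hM⟩
  secondDiff_le := by
    refine ⟨2 * L, fun x z => ?_⟩
    refine (abs_secondDiff_le_of_holder zero_le_one hf (H := L) (by simpa using hL) x z).trans_eq ?_
    rw [Real.rpow_one, ← sq_abs]
    ring

lemma exists_abs_secondDiff_div_sq_le (hf : BoundedC11 f) :
    ∃ K, ∀ x z, |secondDiff f x z / z ^ 2| ≤ K * (1 + z ^ 2)⁻¹ := by
  obtain ⟨M, hM⟩ := hf.bounded
  obtain ⟨L, hL⟩ := hf.secondDiff_le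
  have hM0 : 0 ≤ M := (abs_nonneg _).trans (hM 0)
  have hL0 : 0 ≤ L := by simpa using (abs_nonneg _).trans (hL 0 1)
  refine ⟨4 * M + L, fun x z => ?_⟩
  rcases eq_or_ne z 0 with rfl | hz
  · simp only [secondDiff_zero, zero_div, abs_zero]
    positivity
  · rw [abs_div, abs_sq, ← div_eq_mul_inv, div_le_div_iff₀ (by positivity) (by positivity)]
    linarith [hL x z, mul_le_mul_of_nonneg_right (abs_secondDiff_le_four_mul hM x z) (sq_nonneg z)]

lemma measurable_secondDiff_div_sq (hf : BoundedC11 f) (x : ℝ) :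
    Measurable fun z => secondDiff f x z / z ^ 2 :=
  (continuous_secondDiff hf.continuous x).measurable.div (by fun_prop)

lemma integrable_secondDiff_div_sq (hf : BoundedC11 f) (x : ℝ) :
    Integrable fun z => secondDiff f x z / z ^ 2 := by
  obtain ⟨K, hK⟩ := hf.exists_abs_secondDiff_div_sq_le
  exact (integrable_inv_one_add_sq.const_mul K).mono'
    (hf.measurable_secondDiff_div_sq x).aestronglyMeasurable (.of_forall (hK x))

end BoundedC11

/-- The half-Laplacian as an absolutely convergent integral of second differences; it agrees with
the principal value `A0` on bounded `C^{1,1}` functions. -/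
noncomputable def halfLaplacian (f : ℝ → ℝ) (x : ℝ) : ℝ :=
  ∫ z in Ioi 0, secondDiff f x z / z ^ 2

section PrincipalValue

lemma apos_eq_integral_indicator (δ : ℝ) (f : ℝ → ℝ) (x : ℝ) :
    Apos δ f x = ∫ z, {z : ℝ | δ ≤ |z|}.indicator (fun z => (f x - f (x - z)) / z ^ 2) z := by
  rw [← integral_sub_left_eq_self _ volume x, Apos,
    ← integral_indicator (measurableSet_le measurable_const (by fun_prop))]
  congr 1
  ext y
  simp [indicator]

lemma integrableOn_div_sq_of_abs_le {g : ℝ → ℝ} {M δ : ℝ} (hg : AEStronglyMeasurable g)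
    (hM : ∀ z, |g z| ≤ M) (hδ : 0 < δ) :
    IntegrableOn (fun z => g z / z ^ 2) {z | δ ≤ |z|} := by
  have hmeas : MeasurableSet {z : ℝ | δ ≤ |z|} := measurableSet_le measurable_const (by fun_prop)
  have hinv : IntegrableOn (fun z : ℝ => (z ^ 2)⁻¹) {z | δ ≤ |z|} := by
    refine (integrable_inv_one_add_sq.const_mul (1 + (δ ^ 2)⁻¹)).integrableOn.mono'
      (by fun_prop) ?_
    filter_upwards [ae_restrict_mem hmeas] with z hz
    have hδz : δ ^ 2 ≤ z ^ 2 := by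
      rw [← sq_abs z]
      exact pow_le_pow_left₀ hδ.le hz 2
    have hz0 : 0 < z ^ 2 := (pow_pos hδ 2).trans_le hδz
    have hone : 1 ≤ (δ ^ 2)⁻¹ * z ^ 2 := by
      rwa [inv_mul_eq_div, one_le_div (by positivity)]
    rw [Real.norm_of_nonneg (by positivity), ← div_eq_mul_inv, inv_eq_one_div,
      div_le_div_iff₀ hz0 (by positivity)]
    linarith
  exact hinv.bdd_mul hg.restrict (.of_forall hM)

/-- Averaging the truncated integral with its reflection `z ↦ -z` produces second differences. -/
lemma apos_eq_integral_secondDiff {f : ℝ → ℝ} {M δ : ℝ} (hf : Continuous f)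
    (hM : ∀ x, |f x| ≤ M) (hδ : 0 < δ) (x : ℝ) :
    Apos δ f x =
      ∫ z in Ioi 0, {z : ℝ | δ ≤ |z|}.indicator (fun z => secondDiff f x z / z ^ 2) z := by
  set S : Set ℝ := {z | δ ≤ |z|} with hS
  set F : ℝ → ℝ := S.indicator fun z => (f x - f (x - z)) / z ^ 2 with hF
  set Q : ℝ → ℝ := S.indicator fun z => secondDiff f x z / z ^ 2 with hQ
  have hFi : Integrable F := by
    rw [hF, integrable_indicator_iff (measurableSet_le measurable_const (by fun_prop))]
    exact integrableOn_div_sq_of_abs_le (by fun_prop)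
      (fun z => (abs_sub _ _).trans (add_le_add (hM _) (hM _))) hδ
  have hsum : ∀ z, F z + F (-z) = Q |z| := by
    intro z
    by_cases hz : δ ≤ |z|
    · simp only [hF, hQ, hS, indicator, mem_ofPred_eq, abs_neg, abs_abs, hz, if_true,
        secondDiff_abs, neg_sq, sq_abs, sub_neg_eq_add]
      rw [secondDiff]
      ring
    · simp [hF, hQ, hS, hz]
  have htwice : 2 * Apos δ f x = 2 * ∫ z in Ioi 0, Q z := by
    calc 2 * Apos δ f x = (∫ z, F z) + ∫ z, F (-z) := by
          rw [integral_neg_eq_self, apos_eq_integral_indicator, two_mul]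
      _ = ∫ z, Q |z| := by
          rw [← integral_add hFi hFi.comp_neg]
          simp only [hsum]
      _ = 2 * ∫ z in Ioi 0, Q z := integral_comp_abs
  exact mul_left_cancel₀ two_ne_zero htwice

variable {f : ℝ → ℝ}

lemma tendsto_apos_halfLaplacian (hf : BoundedC11 f) (x : ℝ) :
    Tendsto (fun δ => Apos δ f x) (𝓝[>] 0) (𝓝 (halfLaplacian f x)) := by
  obtain ⟨M, hM⟩ := hf.bounded
  have hmeas (δ : ℝ) : MeasurableSet {z : ℝ | δ ≤ |z|} :=
    measurableSet_le measurable_const (by fun_prop)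
  refine Tendsto.congr' (eventually_mem_nhdsWithin.mono fun δ hδ =>
    (apos_eq_integral_secondDiff hf.continuous hM hδ x).symm) ?_
  refine tendsto_integral_filter_of_dominated_convergence
    (fun z => ‖secondDiff f x z / z ^ 2‖)
    (.of_forall fun δ =>
      ((hf.measurable_secondDiff_div_sq x).indicator (hmeas δ)).aestronglyMeasurable)
    (.of_forall fun δ => .of_forall fun z => norm_indicator_le_norm_self _ _)
    (hf.integrable_secondDiff_div_sq x).norm.integrableOn ?_
  filter_upwards [ae_restrict_mem measurableSet_Ioi] with z hz
  refine tendsto_const_nhds.congr' ?_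
  filter_upwards [nhdsWithin_le_nhds (Iic_mem_nhds hz)] with δ hδ
  have hmem : z ∈ {z : ℝ | δ ≤ |z|} := le_trans hδ (le_abs_self z)
  exact (indicator_of_mem hmem fun z => secondDiff f x z / z ^ 2).symm

lemma a0_eq_halfLaplacian (hf : BoundedC11 f) (x : ℝ) : A0 f x = halfLaplacian f x :=
  (tendsto_apos_halfLaplacian hf x).limUnder_eq

end PrincipalValue

section HalfLaplacian

variable {f f' g : ℝ → ℝ}

lemma halfLaplacian_sub (hf : BoundedC11 f) (hg : BoundedC11 g) (x : ℝ) :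
    halfLaplacian (fun y => f y - g y) x = halfLaplacian f x - halfLaplacian g x := by
  unfold halfLaplacian
  rw [← integral_sub (hf.integrable_secondDiff_div_sq x).integrableOn
    (hg.integrable_secondDiff_div_sq x).integrableOn]
  refine integral_congr_ae (.of_forall fun z => ?_)
  simp only [secondDiff]
  ring

lemma halfLaplacian_const_mul (a : ℝ) (f : ℝ → ℝ) (x : ℝ) :
    halfLaplacian (fun y => a * f y) x = a * halfLaplacian f x := by
  unfold halfLaplacian
  rw [← integral_const_mul]
  refine integral_congr_ae (.of_forall fun z => ?_)
  simp only [secondDiff]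
  ring

lemma hasDerivAt_halfLaplacian (hd : ∀ x, HasDerivAt f (f' x) x) (hf : BoundedC11 f)
    (hf' : BoundedC11 f') (x : ℝ) : HasDerivAt (halfLaplacian f) (halfLaplacian f' x) x := by
  obtain ⟨K, hK⟩ := hf'.exists_abs_secondDiff_div_sq_le
  refine (hasDerivAt_integral_of_dominated_loc_of_deriv_le (μ := volume.restrict (Ioi 0))
    (F := fun y z => secondDiff f y z / z ^ 2) (F' := fun y z => secondDiff f' y z / z ^ 2)
    (bound := fun z => K * (1 + z ^ 2)⁻¹) univ_mem
    (.of_forall fun y => (hf.measurable_secondDiff_div_sq y).aestronglyMeasurable)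
    (hf.integrable_secondDiff_div_sq x).integrableOn
    (hf'.measurable_secondDiff_div_sq x).aestronglyMeasurable
    (.of_forall fun z y _ => hK y z)
    (integrable_inv_one_add_sq.const_mul K).integrableOn
    (.of_forall fun z y _ => ?_)).2
  exact ((((hd y).const_mul 2).sub ((hd (y + z)).comp_add_const y z)).sub
    ((hd (y - z)).comp_sub_const y z)).div_const _

lemma halfLaplacian_nonneg_of_forall_le {x : ℝ} (h : ∀ y, f y ≤ f x) : 0 ≤ halfLaplacian f x :=
  setIntegral_nonneg measurableSet_Ioi fun z _ =>
    div_nonneg (secondDiff_nonneg_of_forall_le h z) (sq_nonneg z)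

lemma mul_halfLaplacian_nonneg_of_forall_abs_le {x : ℝ} (h : ∀ y, |f y| ≤ |f x|) :
    0 ≤ f x * halfLaplacian f x := by
  rw [← halfLaplacian_const_mul]
  refine halfLaplacian_nonneg_of_forall_le fun y => ?_
  calc f x * f y ≤ |f x| * |f y| := (le_abs_self _).trans_eq (abs_mul _ _)
    _ ≤ |f x| * |f x| := mul_le_mul_of_nonneg_left (h y) (abs_nonneg _)
    _ = f x * f x := abs_mul_abs_self _

lemma integrableOn_Ioi_inv_sq {a : ℝ} (ha : 0 < a) :
    IntegrableOn (fun z : ℝ => (z ^ 2)⁻¹) (Ioi a) := by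
  refine (integrableOn_Ioi_rpow_of_lt (by norm_num : (-2 : ℝ) < -1) ha).congr_fun
    (fun z hz => ?_) measurableSet_Ioi
  simp only [Real.rpow_neg (ha.trans hz).le, Real.rpow_two]

lemma integral_Ioi_inv_sq {a : ℝ} (ha : 0 < a) : ∫ z in Ioi a, (z ^ 2)⁻¹ = a⁻¹ := by
  have h := integral_Ioi_rpow_of_lt (by norm_num : (-2 : ℝ) < -1) ha
  rw [show (-2 : ℝ) + 1 = -1 by norm_num, Real.rpow_neg_one, neg_div_neg_eq, div_one] at h
  rw [← h]
  refine setIntegral_congr_fun measurableSet_Ioi fun z hz => ?_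
  simp only [Real.rpow_neg (ha.trans hz).le, Real.rpow_two]

lemma abs_halfLaplacian_sub_integral_Ioc_le {M a : ℝ} (hf : BoundedC11 f) (hM : ∀ x, |f x| ≤ M)
    (ha : 0 < a) (x : ℝ) :
    |halfLaplacian f x - ∫ z in Ioc 0 a, secondDiff f x z / z ^ 2| ≤ 4 * M / a := by
  have hi := (hf.integrable_secondDiff_div_sq x).integrableOn (s := Ioi 0)
  have hsplit : halfLaplacian f x - ∫ z in Ioc 0 a, secondDiff f x z / z ^ 2
      = ∫ z in Ioi a, secondDiff f x z / z ^ 2 := by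
    rw [halfLaplacian, ← Ioc_union_Ioi_eq_Ioi ha.le, setIntegral_union
      Ioc_disjoint_Ioi_same measurableSet_Ioi
      (hi.mono_set Ioc_subset_Ioi_self) (hi.mono_set (Ioi_subset_Ioi ha.le)), add_sub_cancel_left]
  rw [hsplit, div_eq_mul_inv, ← integral_Ioi_inv_sq ha, ← integral_const_mul, ← Real.norm_eq_abs]
  refine norm_integral_le_of_norm_le ((integrableOn_Ioi_inv_sq ha).const_mul (4 * M))
    (.of_forall fun z => ?_)
  rw [Real.norm_eq_abs, abs_div, abs_sq, div_eq_mul_inv]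
  gcongr
  exact abs_secondDiff_le_four_mul hM x z

lemma integral_Ioc_div_sq_eq {φ φ' : ℝ → ℝ} {a : ℝ} (ha : 0 < a)
    (hφ : ∀ z, HasDerivAt φ (φ' z) z) (hφ₀ : φ 0 = 0) (hφ₀' : φ' 0 = 0)
    (hi : IntegrableOn (fun z => φ z / z ^ 2) (Ioc 0 a))
    (hi' : IntegrableOn (fun z => φ' z / z) (Ioc 0 a)) :
    ∫ z in Ioc 0 a, φ z / z ^ 2 = (∫ z in Ioc 0 a, φ' z / z) - φ a / a := by
  have hderiv : ∀ z ∈ Ioo 0 a, HasDerivAt (fun z => φ z / z) (φ' z / z - φ z / z ^ 2) z := by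
    intro z hz
    have hz0 : z ≠ 0 := hz.1.ne'
    refine ((hφ z).div (hasDerivAt_id z) hz0).congr_deriv ?_
    simp only [id]
    field_simp
  have hzero : Tendsto (fun z => φ z / z) (𝓝[>] 0) (𝓝 0) := by
    simpa [hφ₀, hφ₀', inv_mul_eq_div] using (hφ 0).tendsto_slope_zero_right
  have hend : Tendsto (fun z => φ z / z) (𝓝[<] a) (𝓝 (φ a / a)) :=
    ((hφ a).continuousAt.div continuousAt_id ha.ne').tendsto.mono_left nhdsWithin_le_nhds
  have hftc := intervalIntegral.integral_eq_sub_of_hasDerivAt_of_tendsto ha hderiv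
    ((intervalIntegrable_iff_integrableOn_Ioc_of_le ha.le).2 (hi'.sub hi)) hzero hend
  rw [intervalIntegral.integral_of_le ha.le, integral_sub hi' hi, sub_zero] at hftc
  rw [← hftc, sub_sub_cancel]

variable {u w : ℝ → ℝ}

lemma abs_deriv_secondDiff_div_le {x z ε : ℝ} (hmax : ∀ y, w y ≤ w x) (hz : z ∈ Ioc 0 ε) :
    |(w (x - z) - w (x + z)) / z| ≤ ε * (secondDiff w x z / z ^ 2) := by
  have hle : |w (x - z) - w (x + z)| ≤ secondDiff w x z := by
    rw [secondDiff, abs_le]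
    constructor <;> linarith [hmax (x + z), hmax (x - z)]
  calc |(w (x - z) - w (x + z)) / z| ≤ secondDiff w x z / z := by
        rw [abs_div, abs_of_pos hz.1]
        exact div_le_div_of_nonneg_right hle hz.1.le
    _ = z * (secondDiff w x z / z ^ 2) := by
        have := hz.1.ne'
        field_simp
    _ ≤ ε * (secondDiff w x z / z ^ 2) :=
        mul_le_mul_of_nonneg_right hz.2
          (div_nonneg (secondDiff_nonneg_of_forall_le hmax z) (sq_nonneg z))

/-- On `(0, ε]` one integrates by parts and compares first with second differences of `w` at the
maximum point; the rest is estimated by the size of `u`. -/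
lemma abs_halfLaplacian_le_of_deriv_max {M ε x : ℝ} (hd : ∀ x, HasDerivAt u (w x) x)
    (hM : ∀ x, |u x| ≤ M) (hu : BoundedC11 u) (hw : BoundedC11 w) (hmax : ∀ y, w y ≤ w x)
    (hε : 0 < ε) : |halfLaplacian u x| ≤ ε * halfLaplacian w x + 8 * M / ε := by
  have hwi := (hw.integrable_secondDiff_div_sq x).integrableOn (s := Ioi 0)
  have hwε := (hwi.mono_set Ioc_subset_Ioi_self).const_mul (μ := volume.restrict (Ioc 0 ε)) ε
  have hdom : ∀ᵐ z ∂volume.restrict (Ioc 0 ε),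
      ‖(w (x - z) - w (x + z)) / z‖ ≤ ε * (secondDiff w x z / z ^ 2) :=
    (ae_restrict_mem measurableSet_Ioc).mono fun z hz => abs_deriv_secondDiff_div_le hmax hz
  have hi : IntegrableOn (fun z => (w (x - z) - w (x + z)) / z) (Ioc 0 ε) := by
    have := hw.continuous.measurable
    exact hwε.mono' (Measurable.aestronglyMeasurable (by fun_prop)) hdom
  have hnear : |∫ z in Ioc 0 ε, (w (x - z) - w (x + z)) / z| ≤ ε * halfLaplacian w x := by
    refine (norm_integral_le_of_norm_le hwε hdom).trans ?_
    rw [integral_const_mul]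
    refine mul_le_mul_of_nonneg_left (setIntegral_mono_set hwi (.of_forall fun z => ?_)
      Ioc_subset_Ioi_self.eventuallyLE) hε.le
    exact div_nonneg (secondDiff_nonneg_of_forall_le hmax z) (sq_nonneg z)
  have hparts := integral_Ioc_div_sq_eq hε (hasDerivAt_secondDiff hd x) (secondDiff_zero u x)
    (by simp only [sub_zero, add_zero, sub_self])
    (hu.integrable_secondDiff_div_sq x).integrableOn hi
  have hbdry : |secondDiff u x ε / ε| ≤ 4 * M / ε := by
    rw [abs_div, abs_of_pos hε]
    exact div_le_div_of_nonneg_right (abs_secondDiff_le_four_mul hM x ε) hε.le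
  have htail := abs_halfLaplacian_sub_integral_Ioc_le hu hM hε x
  rw [hparts] at htail
  rw [show 8 * M / ε = 4 * M / ε + 4 * M / ε by ring]
  rw [abs_le] at *
  constructor <;> linarith

lemma abs_halfLaplacian_le_of_holder {M H α : ℝ} (hα : 0 < α) (hd : ∀ x, HasDerivAt u (w x) x)
    (hu : BoundedC11 u) (hM : ∀ x, |u x| ≤ M) (hH : ∀ x y, |w x - w y| ≤ H * |x - y| ^ α) (x : ℝ) :
    |halfLaplacian u x| ≤ 2 ^ α * H / α + 4 * M := by
  have hpow : ∀ z ∈ Ioc (0 : ℝ) 1, ‖secondDiff u x z / z ^ 2‖ ≤ 2 ^ α * H * z ^ (α - 1) := by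
    intro z hz
    have hle := abs_secondDiff_le_of_holder hα.le hd hH x z
    rw [abs_of_pos hz.1, Real.mul_rpow zero_le_two hz.1.le] at hle
    rw [Real.norm_eq_abs, abs_div, abs_sq, div_le_iff₀ (pow_pos hz.1 2),
      Real.rpow_sub_one hz.1.ne']
    refine hle.trans_eq ?_
    have := hz.1.ne'
    field_simp
  have hi : IntervalIntegrable (fun z : ℝ => z ^ (α - 1)) volume 0 1 :=
    intervalIntegral.intervalIntegrable_rpow' (by linarith)
  have hnear : |∫ z in Ioc 0 1, secondDiff u x z / z ^ 2| ≤ 2 ^ α * H / α := by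
    calc |∫ z in Ioc 0 1, secondDiff u x z / z ^ 2| ≤ ∫ z in Ioc 0 1, 2 ^ α * H * z ^ (α - 1) :=
          norm_integral_le_of_norm_le (hi.const_mul _).1
            ((ae_restrict_mem measurableSet_Ioc).mono hpow)
      _ = 2 ^ α * H / α := by
          rw [← intervalIntegral.integral_of_le zero_le_one, intervalIntegral.integral_const_mul,
            integral_rpow (Or.inl (by linarith)), sub_add_cancel, Real.one_rpow,
            Real.zero_rpow hα.ne', sub_zero, mul_one_div]
  have htail := abs_halfLaplacian_sub_integral_Ioc_le hu hM one_pos x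
  rw [div_one] at htail
  have htri := abs_sub_abs_le_abs_sub (halfLaplacian u x)
    (∫ z in Ioc 0 1, secondDiff u x z / z ^ 2)
  linarith

end HalfLaplacian

/-- Kernels `β` whose slices `β x` lie in a ball of radius `M` of `L¹`. -/
def IsL1BoundedKernel (β : ℝ → ℝ → ℝ) (M : ℝ) : Prop :=
  ∀ x, Integrable (β x) ∧ ∫ y, |β x y| ≤ M

namespace IsL1BoundedKernel

variable {β : ℝ → ℝ → ℝ} {M : ℝ}

lemma nonneg (hβ : IsL1BoundedKernel β M) : 0 ≤ M :=
  (integral_nonneg fun _ => abs_nonneg _).trans (hβ 0).2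

lemma of_abs_le {g : ℝ → ℝ → ℝ} (hβ : ∀ x, AEStronglyMeasurable (β x))
    (hg : ∀ x, Integrable (g x) ∧ ∫ y, g x y ≤ M) (hle : ∀ x y, |β x y| ≤ g x y) :
    IsL1BoundedKernel β M := fun x =>
  have hi : Integrable (β x) := (hg x).1.mono' (hβ x) (.of_forall (hle x))
  ⟨hi, (integral_mono hi.abs (hg x).1 (hle x)).trans (hg x).2⟩

lemma abs_bop_le (hβ : IsL1BoundedKernel β M) {v : ℝ → ℝ} {m : ℝ} (hv : ∀ y, |v y| ≤ m) (x : ℝ) :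
    |Bop β x v| ≤ M * m := by
  have hm : 0 ≤ m := (abs_nonneg _).trans (hv 0)
  calc |Bop β x v| ≤ ∫ y, |β x y| * m := by
        refine norm_integral_le_of_norm_le (f := fun y => β x y * v y)
          ((hβ x).1.abs.mul_const m) (.of_forall fun y => ?_)
        rw [norm_mul]
        exact mul_le_mul_of_nonneg_left (hv y) (norm_nonneg _)
    _ = (∫ y, |β x y|) * m := integral_mul_const _ _
    _ ≤ M * m := mul_le_mul_of_nonneg_right (hβ x).2 hm

lemma bop_sub (hβ : IsL1BoundedKernel β M) {v v' : ℝ → ℝ} {m m' : ℝ}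
    (hvm : AEStronglyMeasurable v) (hvm' : AEStronglyMeasurable v') (hv : ∀ y, |v y| ≤ m)
    (hv' : ∀ y, |v' y| ≤ m') (x : ℝ) :
    Bop β x (fun y => v y - v' y) = Bop β x v - Bop β x v' := by
  unfold Bop
  rw [← integral_sub ((hβ x).1.mul_bdd hvm (.of_forall hv))
    ((hβ x).1.mul_bdd hvm' (.of_forall hv'))]
  simp only [mul_sub]

end IsL1BoundedKernel

section KernelLipschitz

variable {β : ℝ → ℝ → ℝ} {M : ℝ}

lemma aestronglyMeasurable_slice (hβ : Continuous (Function.uncurry β)) (x : ℝ) :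
    AEStronglyMeasurable (β x) :=
  (hβ.comp (Continuous.prodMk_right x)).aestronglyMeasurable

lemma measurable_uncurry_deriv_fst (hβ : Continuous (Function.uncurry β)) :
    Measurable fun p : ℝ × ℝ => deriv (fun z => β z p.2) p.1 :=
  (measurable_deriv_with_param (f := fun y z => β z y) (hβ.comp continuous_swap)).comp
    measurable_swap

lemma isL1BoundedKernel_and_deriv_of_integral_sum_le {r : ℝ → ℝ → ℝ}
    (hβ : Continuous (Function.uncurry β))
    (h : ∀ x, Integrable (fun y => |β x y| + |deriv (fun z => β z y) x| + |r x y|) ∧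
      ∫ y, |β x y| + |deriv (fun z => β z y) x| + |r x y| ≤ M) :
    IsL1BoundedKernel β M ∧ IsL1BoundedKernel (fun x y => deriv (fun z => β z y) x) M := by
  refine ⟨.of_abs_le (aestronglyMeasurable_slice hβ) h fun x y => ?_,
    .of_abs_le (fun x => ?_) h fun x y => ?_⟩
  · rw [add_assoc]
    exact le_add_of_nonneg_right (by positivity)
  · exact ((measurable_uncurry_deriv_fst hβ).comp measurable_prodMk_left).aestronglyMeasurable
  · rw [add_right_comm]
    exact le_add_of_nonneg_left (by positivity)

/-- Integrate `∂ₓβ` in `x` first, then exchange the order of integration. -/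
lemma lintegral_enorm_sub_le (hβ : ContDiff ℝ 1 (Function.uncurry β))
    (hβ' : IsL1BoundedKernel (fun x y => deriv (fun z => β z y) x) M) {a b : ℝ} (hab : a ≤ b) :
    ∫⁻ y, ‖β b y - β a y‖ₑ ≤ ENNReal.ofReal (M * (b - a)) := by
  have hM : 0 ≤ M := hβ'.nonneg
  have hslice (y : ℝ) : ContDiff ℝ 1 fun z => β z y := hβ.comp (contDiff_prodMk_left y)
  calc ∫⁻ y, ‖β b y - β a y‖ₑ
      ≤ ∫⁻ y, ∫⁻ z in Icc a b, ‖deriv (fun z => β z y) z‖ₑ := by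
        refine lintegral_mono fun y => ?_
        exact enorm_sub_le_lintegral_deriv_of_contDiffOn_Icc (hslice y).contDiffOn hab
    _ = ∫⁻ z in Icc a b, ∫⁻ y, ‖deriv (fun z => β z y) z‖ₑ := lintegral_lintegral_swap
        ((measurable_uncurry_deriv_fst hβ.continuous).comp measurable_swap).enorm.aemeasurable
    _ ≤ ∫⁻ _ in Icc a b, ENNReal.ofReal M := by
        refine lintegral_mono fun z => ?_
        rw [← ofReal_integral_norm_eq_lintegral_enorm (hβ' z).1]
        exact ENNReal.ofReal_le_ofReal (hβ' z).2
    _ = ENNReal.ofReal (M * (b - a)) := by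
        rw [setLIntegral_const, Real.volume_Icc, ENNReal.ofReal_mul hM]

lemma integral_abs_sub_le (hβ : ContDiff ℝ 1 (Function.uncurry β))
    (hβ' : IsL1BoundedKernel (fun x y => deriv (fun z => β z y) x) M) (a b : ℝ) :
    ∫ y, |β b y - β a y| ≤ M * |b - a| := by
  wlog hab : a ≤ b generalizing a b
  · simp only [abs_sub_comm (β b _), abs_sub_comm b]
    exact this b a (le_of_not_ge hab)
  have hM : 0 ≤ M := hβ'.nonneg
  have hmeas := (aestronglyMeasurable_slice hβ.continuous b).sub
    (aestronglyMeasurable_slice hβ.continuous a)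
  rw [abs_of_nonneg (sub_nonneg.2 hab)]
  refine (integral_norm_eq_lintegral_enorm hmeas).trans_le ?_
  exact ENNReal.toReal_le_of_le_ofReal (mul_nonneg hM (sub_nonneg.2 hab))
    (lintegral_enorm_sub_le hβ hβ' hab)

lemma abs_bop_sub_bop_le {M' m : ℝ} (hβ : ContDiff ℝ 1 (Function.uncurry β))
    (hβ₁ : IsL1BoundedKernel β M')
    (hβ' : IsL1BoundedKernel (fun x y => deriv (fun z => β z y) x) M) {v : ℝ → ℝ}
    (hvm : AEStronglyMeasurable v) (hv : ∀ y, |v y| ≤ m) (x x' : ℝ) :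
    |Bop β x v - Bop β x' v| ≤ M * m * |x - x'| := by
  have hdiff : IsL1BoundedKernel (fun _ y => β x y - β x' y) (M * |x - x'|) := fun _ =>
    ⟨(hβ₁ x).1.sub (hβ₁ x').1, integral_abs_sub_le hβ hβ' x' x⟩
  have hsub : Bop β x v - Bop β x' v = Bop (fun _ y => β x y - β x' y) x v := by
    unfold Bop
    rw [← integral_sub ((hβ₁ x).1.mul_bdd hvm (.of_forall hv))
      ((hβ₁ x').1.mul_bdd hvm (.of_forall hv))]
    simp only [sub_mul]
  rw [hsub, mul_right_comm]
  exact hdiff.abs_bop_le hv x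

end KernelLipschitz

section PartialDerivatives

variable {E : Type*} [NormedAddCommGroup E] [NormedSpace ℝ E]
  {u : ℝ → ℝ → E} {t x : ℝ}

lemma hasDerivAt_fst_of_differentiableAt
    (hu : DifferentiableAt ℝ (Function.uncurry u) (t, x)) :
    HasDerivAt (fun s => u s x) (fderiv ℝ (Function.uncurry u) (t, x) (1, 0)) t :=
  hu.hasFDerivAt.comp_hasDerivAt (f := fun s => (s, x)) t
    ((hasDerivAt_id t).prodMk (hasDerivAt_const t x))

lemma hasDerivAt_snd_of_differentiableAt
    (hu : DifferentiableAt ℝ (Function.uncurry u) (t, x)) :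
    HasDerivAt (u t) (fderiv ℝ (Function.uncurry u) (t, x) (0, 1)) x :=
  hu.hasFDerivAt.comp_hasDerivAt (f := fun y => (t, y)) x
    ((hasDerivAt_const x t).prodMk (hasDerivAt_id x))

lemma exists_hasDerivAt_mixed
    (hu : ContDiffAt ℝ 2 (Function.uncurry u) (t, x)) :
    ∃ d, HasDerivAt (fun s => deriv (u s) x) d t ∧
      HasDerivAt (fun y => deriv (fun s => u s y) t) d x := by
  set U := Function.uncurry u
  have hdiff : ∀ᶠ p in 𝓝 (t, x), DifferentiableAt ℝ U p :=
    (hu.eventually (by simp)).mono fun p hp => hp.differentiableAt (by simp)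
  have hU' : DifferentiableAt ℝ (fderiv ℝ U) (t, x) :=
    (hu.fderiv_right (m := 1) (by norm_num)).differentiableAt (by simp)
  have ht : HasDerivAt (fun s => fderiv ℝ U (s, x)) (fderiv ℝ (fderiv ℝ U) (t, x) (1, 0)) t :=
    hasDerivAt_fst_of_differentiableAt (u := fun s y => fderiv ℝ U (s, y)) hU'
  have hx : HasDerivAt (fun y => fderiv ℝ U (t, y)) (fderiv ℝ (fderiv ℝ U) (t, x) (0, 1)) x :=
    hasDerivAt_snd_of_differentiableAt (u := fun s y => fderiv ℝ U (s, y)) hU'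
  refine ⟨fderiv ℝ (fderiv ℝ U) (t, x) (1, 0) (0, 1), ?_, ?_⟩
  · refine (ht.clm_apply (hasDerivAt_const t (0, 1))).congr_of_eventuallyEq ?_ |>.congr_deriv
      (by simp)
    filter_upwards [(Continuous.prodMk_left x).continuousAt.eventually hdiff] with s hs
    exact (hasDerivAt_snd_of_differentiableAt hs).deriv
  · rw [(hu.isSymmSndFDerivAt (by simp)).eq]
    refine (hx.clm_apply (hasDerivAt_const x (1, 0))).congr_of_eventuallyEq ?_ |>.congr_deriv
      (by simp)
    filter_upwards [(Continuous.prodMk_right t).continuousAt.eventually hdiff] with y hy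
    exact (hasDerivAt_fst_of_differentiableAt hy).deriv

end PartialDerivatives

section OneVariable

variable {f : ℝ → ℝ} {f' t : ℝ}

lemma hasDerivAt_eq_zero_of_forall_abs_le (hf : HasDerivAt f f' t)
    (hmax : ∀ y, |f y| ≤ |f t|) : f' = 0 := by
  rcases le_total 0 (f t) with ht | ht
  · have h : IsLocalMax f t :=
      .of_forall fun y => (le_abs_self _).trans ((hmax y).trans_eq (abs_of_nonneg ht))
    exact h.hasDerivAt_eq_zero hf
  · have h : IsLocalMin f t := .of_forall fun y => by
      linarith [neg_abs_le (f y), hmax y, abs_of_nonpos ht]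
    exact h.hasDerivAt_eq_zero hf

lemma hasDerivAt_nonneg_of_eventually_le_left (hf : HasDerivAt f f' t)
    (hle : ∀ᶠ s in 𝓝[<] t, f s ≤ f t) : 0 ≤ f' := by
  refine ge_of_tendsto (hf.tendsto_slope.mono_left (nhdsLT_le_nhdsNE t)) ?_
  filter_upwards [hle, self_mem_nhdsWithin] with s hs hst
  rw [slope_def_field]
  exact div_nonneg_of_nonpos (sub_nonpos.2 hs) (sub_nonpos.2 (le_of_lt hst))

lemma abs_deriv_le_of_eventually_abs_sub_le {C : ℝ} (hC : 0 ≤ C)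
    (hle : ∀ᶠ h in 𝓝[>] 0, |f (t + h) - f t| ≤ C * h) : |deriv f t| ≤ C := by
  by_cases hf : DifferentiableAt ℝ f t
  · refine le_of_tendsto hf.hasDerivAt.tendsto_slope_zero_right.abs ?_
    filter_upwards [hle, self_mem_nhdsWithin] with h hh hpos
    rw [smul_eq_mul, abs_mul, abs_of_pos (inv_pos.2 hpos), inv_mul_le_iff₀ hpos, mul_comm]
    exact hh
  · rwa [deriv_zero_of_not_differentiableAt hf, abs_zero]

end OneVariable

section MaximumPrinciple

variable {X : Type*} [TopologicalSpace X] {f : ℝ → X → ℝ} {T m : ℝ}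

lemma abs_le_of_deriv_mul_neg_at_max (hf : ContinuousOn (Function.uncurry f) (Icc 0 T ×ˢ univ))
    (hdecay : TendstoUniformlyOn (fun x t => f t x) 0 (cocompact X) (Icc 0 T))
    (hderiv : ∀ t ∈ Ioc 0 T, ∀ x, f t x ≠ 0 → (∀ y, |f t y| ≤ |f t x|) →
      ∃ d, HasDerivAt (fun s => f s x) d t ∧ d * f t x < 0)
    (h₀ : ∀ x, |f 0 x| ≤ m) {t : ℝ} (ht : t ∈ Icc 0 T) (x : X) : |f t x| ≤ m := by
  by_contra! hlt
  have hpos : 0 < |f t x| := (abs_nonneg _).trans_lt ((h₀ x).trans_lt hlt)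
  have hfar : ∀ᶠ p in cocompact (ℝ × X) ⊓ 𝓟 (Icc 0 T ×ˢ univ),
      |Function.uncurry f p| ≤ |Function.uncurry f (t, x)| := by
    obtain ⟨K, hK, hKle⟩ := mem_cocompact.1 (Metric.tendstoUniformlyOn_iff.1 hdecay _ hpos)
    filter_upwards [mem_inf_of_left (isCompact_Icc.prod hK).compl_mem_cocompact,
      mem_inf_of_right (mem_principal_self _)]
    rintro ⟨s, y⟩ hyK ⟨hs, -⟩
    have hy : y ∉ K := fun h => hyK ⟨hs, h⟩
    simpa [Function.uncurry] using (hKle hy s hs).le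
  obtain ⟨⟨t₀, x₀⟩, ⟨ht₀, -⟩, hmax⟩ := hf.abs.exists_isMaxOn' (isClosed_Icc.prod isClosed_univ)
    (x₀ := (t, x)) ⟨ht, mem_univ x⟩ hfar
  have hmax' : ∀ s ∈ Icc 0 T, ∀ y, |f s y| ≤ |f t₀ x₀| := fun s hs y =>
    hmax (show (s, y) ∈ Icc 0 T ×ˢ univ from ⟨hs, mem_univ y⟩)
  have hlt₀ : m < |f t₀ x₀| := hlt.trans_le (hmax' t ht x)
  have ht₀pos : 0 < t₀ := ht₀.1.lt_of_ne fun h => (h₀ x₀).not_gt (by rwa [h])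
  obtain ⟨d, hd, hneg⟩ := hderiv t₀ ⟨ht₀pos, ht₀.2⟩ x₀
    (abs_pos.1 (hpos.trans_le (hmax' t ht x))) (hmax' t₀ ht₀)
  have hnonneg := hasDerivAt_nonneg_of_eventually_le_left (hd.pow 2) <| by
    filter_upwards [Ioo_mem_nhdsLT ht₀pos] with s hs
    exact sq_le_sq.2 (hmax' s ⟨hs.1.le, hs.2.le.trans ht₀.2⟩ x₀)
  simp only [Nat.cast_ofNat, Nat.add_one_sub_one, pow_one] at hnonneg
  linarith

lemma tendstoUniformlyOn_bdd_mul_zero {ι α : Type*} {l : Filter ι} {s : Set α} {F : ι → α → ℝ}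
    {a : α → ℝ} {B : ℝ} (ha : ∀ t ∈ s, |a t| ≤ B) (hF : TendstoUniformlyOn F 0 l s) :
    TendstoUniformlyOn (fun i t => a t * F i t) 0 l s := by
  rw [Metric.tendstoUniformlyOn_iff] at hF ⊢
  intro ε hε
  filter_upwards [hF (ε / (|B| + 1)) (by positivity)] with i hi t ht
  have hlt := hi t ht
  simp only [Pi.zero_apply, dist_zero_left, norm_mul, Real.norm_eq_abs] at hlt ⊢
  rw [lt_div_iff₀' (by positivity)] at hlt
  refine (mul_le_mul_of_nonneg_right ?_ (abs_nonneg _)).trans_lt hlt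
  linarith [ha t ht, le_abs_self B]

/-- The strict version applies to `exp (-K' t) f` for every `K' > K`. -/
lemma abs_le_exp_mul_of_deriv_mul_le_at_max {K : ℝ}
    (hf : ContinuousOn (Function.uncurry f) (Icc 0 T ×ˢ univ))
    (hdecay : TendstoUniformlyOn (fun x t => f t x) 0 (cocompact X) (Icc 0 T))
    (hderiv : ∀ t ∈ Ioc 0 T, ∀ x, f t x ≠ 0 → (∀ y, |f t y| ≤ |f t x|) →
      ∃ d, HasDerivAt (fun s => f s x) d t ∧ d * f t x ≤ K * f t x ^ 2)
    (h₀ : ∀ x, |f 0 x| ≤ m) {t : ℝ} (ht : t ∈ Icc 0 T) (x : X) :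
    |f t x| ≤ Real.exp (K * t) * m := by
  suffices h : ∀ K' > K, |f t x| ≤ Real.exp (K' * t) * m by
    have hcont : Continuous fun K' => Real.exp (K' * t) * m := by fun_prop
    exact ge_of_tendsto (hcont.continuousWithinAt (s := Ioi K)) (eventually_mem_nhdsWithin.mono h)
  intro K' hK'
  have hexp : |Real.exp (-K' * t) * f t x| ≤ m := by
    refine abs_le_of_deriv_mul_neg_at_max (f := fun t x => Real.exp (-K' * t) * f t x)
      ?_ ?_ ?_ ?_ ht x
    · exact ContinuousOn.mul (by fun_prop) hf
    · obtain ⟨B, hB⟩ := isCompact_Icc.exists_bound_of_continuousOn (s := Icc 0 T)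
        (f := fun s => Real.exp (-K' * s)) (by fun_prop)
      exact tendstoUniformlyOn_bdd_mul_zero hB hdecay
    · intro s hs y hne hmax
      have hf0 : f s y ≠ 0 := right_ne_zero_of_mul hne
      obtain ⟨d, hd, hle⟩ := hderiv s hs y hf0 fun z => by
        simpa only [abs_mul, Real.abs_exp, mul_le_mul_iff_right₀ (Real.exp_pos _)] using hmax z
      have hexp : HasDerivAt (fun s => Real.exp (-K' * s)) (Real.exp (-K' * s) * -K') s := by
        simpa using ((hasDerivAt_id s).const_mul (-K')).exp
      refine ⟨_, hexp.mul hd, ?_⟩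
      calc (Real.exp (-K' * s) * -K' * f s y + Real.exp (-K' * s) * d)
              * (Real.exp (-K' * s) * f s y)
          = Real.exp (-K' * s) ^ 2 * (d * f s y - K' * f s y ^ 2) := by ring
        _ < 0 := mul_neg_of_pos_of_neg (by positivity) (by
            linarith [mul_lt_mul_of_pos_right hK' (sq_pos_of_ne_zero hf0)])
    · simpa using h₀
  rwa [abs_mul, Real.abs_exp, neg_mul, Real.exp_neg, inv_mul_le_iff₀ (Real.exp_pos _)] at hexp

end MaximumPrinciple

section Schwartz

lemma continuous_schwartz_seminorm (k : ℕ) :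
    Continuous fun f : 𝓢(ℝ, ℝ) => SchwartzMap.seminorm ℝ k 0 f :=
  (schwartz_withSeminorms ℝ ℝ ℝ).continuous_seminorm (k, 0)

variable (f : 𝓢(ℝ, ℝ))

lemma abs_schwartz_sub_le (x y : ℝ) :
    |f x - f y| ≤ SchwartzMap.seminorm ℝ 0 0 (SchwartzMap.derivCLM ℝ ℝ f) * |x - y| := by
  refine convex_univ.norm_image_sub_le_of_norm_hasDerivWithin_le
    (fun z _ => (f.hasDerivAt z).hasDerivWithinAt) (fun z _ => ?_) (mem_univ y) (mem_univ x)
  rw [← SchwartzMap.derivCLM_apply ℝ f z]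
  exact SchwartzMap.norm_le_seminorm ℝ _ z

lemma boundedC11_of_hasDerivAt_schwartz {u : ℝ → ℝ} {M : ℝ} (hd : ∀ x, HasDerivAt u (f x) x)
    (hM : ∀ x, |u x| ≤ M) : BoundedC11 u :=
  .of_hasDerivAt hd hM (abs_schwartz_sub_le f)

lemma boundedC11_schwartz : BoundedC11 f :=
  boundedC11_of_hasDerivAt_schwartz (SchwartzMap.derivCLM ℝ ℝ f) f.hasDerivAt
    (SchwartzMap.norm_le_seminorm ℝ f)

end Schwartz

/-- `u` solves `∂ₜu + c ∂ₓu A₀[u] + B(·; u) ∂ₓu = 0` for positive times and increases from `0` at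
`-∞` to `1` at `+∞`; `w t` is the slope `∂ₓu(t, ·)`, and `M₁`, `M₂` bound the coefficients. -/
structure IsFrontSolution (c : ℝ → ℝ) (β u : ℝ → ℝ → ℝ) (w : ℝ → 𝓢(ℝ, ℝ)) (M₁ M₂ : ℝ) :
    Prop where
  coeff_differentiable : Differentiable ℝ c
  coeff_bound : ∀ x, M₁⁻¹ ≤ c x ∧ c x ≤ M₁ ∧ |deriv c x| ≤ M₁
  kernel_contDiff : ContDiff ℝ 1 (Function.uncurry β)
  kernel_bound : IsL1BoundedKernel β M₂
  kernel_deriv_bound : IsL1BoundedKernel (fun x y => deriv (fun z => β z y) x) M₂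
  contDiffOn : ContDiffOn ℝ 2 (Function.uncurry u) (Ici 0 ×ˢ univ)
  monotone : ∀ t, 0 ≤ t → Monotone (u t)
  tendsto_atBot : ∀ t, 0 ≤ t → Tendsto (u t) atBot (𝓝 0)
  tendsto_atTop : ∀ t, 0 ≤ t → Tendsto (u t) atTop (𝓝 1)
  continuous_slope : Continuous w
  slope_eq : ∀ t x, 0 ≤ t → w t x = deriv (fun y => u t y) x
  equation : ∀ t x, 0 < t →
    deriv (fun s => u s x) t + c x * deriv (fun y => u t y) x * A0 (u t) x
      + Bop β x (u t) * deriv (fun y => u t y) x = 0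

namespace IsFrontSolution

variable {c : ℝ → ℝ} {β u : ℝ → ℝ → ℝ} {w : ℝ → 𝓢(ℝ, ℝ)} {M₁ M₂ : ℝ}

lemma abs_le_one (S : IsFrontSolution c β u w M₁ M₂) {t : ℝ} (ht : 0 ≤ t) (x : ℝ) :
    |u t x| ≤ 1 := by
  rw [abs_of_nonneg ((S.monotone t ht).le_of_tendsto (S.tendsto_atBot t ht) x)]
  exact (S.monotone t ht).ge_of_tendsto (S.tendsto_atTop t ht) x

lemma hasDerivAt_slope (S : IsFrontSolution c β u w M₁ M₂) {t : ℝ} (ht : 0 ≤ t) (x : ℝ) :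
    HasDerivAt (u t) (w t x) x := by
  have hcont : ContDiff ℝ 2 (u t) := contDiffOn_univ.1 <|
    S.contDiffOn.comp (contDiff_prodMk_right t).contDiffOn fun y _ => ⟨ht, mem_univ y⟩
  rw [S.slope_eq t x ht]
  exact (hcont.differentiable (by simp) x).hasDerivAt

lemma slope_nonneg (S : IsFrontSolution c β u w M₁ M₂) {t : ℝ} (ht : 0 ≤ t) (x : ℝ) :
    0 ≤ w t x := by
  rw [← (S.hasDerivAt_slope ht x).deriv]
  exact (S.monotone t ht).deriv_nonneg

lemma boundedC11 (S : IsFrontSolution c β u w M₁ M₂) {t : ℝ} (ht : 0 ≤ t) : BoundedC11 (u t) :=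
  boundedC11_of_hasDerivAt_schwartz (w t) (S.hasDerivAt_slope ht) (S.abs_le_one ht)

lemma deriv_time_eq (S : IsFrontSolution c β u w M₁ M₂) {t : ℝ} (ht : 0 < t) (x : ℝ) :
    deriv (fun s => u s x) t = -(w t x * (c x * halfLaplacian (u t) x + Bop β x (u t))) := by
  have h := S.equation t x ht
  rw [a0_eq_halfLaplacian (S.boundedC11 ht.le), ← S.slope_eq t x ht.le] at h
  linarith

lemma coeff_pos (S : IsFrontSolution c β u w M₁ M₂) (hM₁ : 0 < M₁) (x : ℝ) : 0 < c x :=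
  (inv_pos.2 hM₁).trans_le (S.coeff_bound x).1

lemma abs_drift_sub_le (S : IsFrontSolution c β u w M₁ M₂) {t : ℝ} (ht : 0 ≤ t) (x x' : ℝ) :
    |Bop β x (u t) - Bop β x' (u t)| ≤ M₂ * |x - x'| := by
  simpa using abs_bop_sub_bop_le S.kernel_contDiff S.kernel_bound S.kernel_deriv_bound
    (S.boundedC11 ht).continuous.aestronglyMeasurable (S.abs_le_one ht) x x'

lemma contDiffAt (S : IsFrontSolution c β u w M₁ M₂) {t : ℝ} (ht : 0 < t) (x : ℝ) :
    ContDiffAt ℝ 2 (Function.uncurry u) (t, x) :=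
  S.contDiffOn.contDiffAt (prod_mem_nhds (Ici_mem_nhds ht) univ_mem)

lemma differentiableAt_time (S : IsFrontSolution c β u w M₁ M₂) {t : ℝ} (ht : 0 < t) (x : ℝ) :
    DifferentiableAt ℝ (fun s => u s x) t :=
  (hasDerivAt_fst_of_differentiableAt
    ((S.contDiffAt ht x).differentiableAt (by simp))).differentiableAt

lemma continuousOn_time (S : IsFrontSolution c β u w M₁ M₂) (T x : ℝ) :
    ContinuousOn (fun s => u s x) (Icc 0 T) :=
  S.contDiffOn.continuousOn.comp (f := fun s => (s, x)) (by fun_prop)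
    fun _ hs => ⟨hs.1, mem_univ x⟩

lemma continuous_uncurry_slope (S : IsFrontSolution c β u w M₁ M₂) :
    Continuous (Function.uncurry fun t x => w t x) := by
  have h : Continuous fun p : ℝ × ℝ =>
      (SchwartzMap.toBoundedContinuousFunctionCLM ℝ ℝ ℝ (w p.1), p.2) :=
    ((SchwartzMap.toBoundedContinuousFunctionCLM ℝ ℝ ℝ).continuous.comp
      (S.continuous_slope.comp continuous_fst)).prodMk continuous_snd
  exact continuous_eval.comp h

lemma tendstoUniformlyOn_slope_cocompact (S : IsFrontSolution c β u w M₁ M₂) (T : ℝ) :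
    TendstoUniformlyOn (fun x t => w t x) 0 (cocompact ℝ) (Icc 0 T) := by
  obtain ⟨P, hP⟩ := isCompact_Icc.exists_bound_of_continuousOn (s := Icc 0 T)
    ((continuous_schwartz_seminorm 1).comp S.continuous_slope).continuousOn
  rw [Metric.tendstoUniformlyOn_iff]
  intro ε hε
  filter_upwards [tendsto_norm_cocompact_atTop.eventually_gt_atTop (P / ε),
    tendsto_norm_cocompact_atTop.eventually_gt_atTop 0] with x hx hx0 t ht
  have hle := (SchwartzMap.norm_pow_mul_le_seminorm ℝ (w t) 1 x).trans
    ((le_abs_self _).trans (hP t ht))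
  rw [pow_one] at hle
  rw [div_lt_iff₀' hε, mul_comm] at hx
  rw [Pi.zero_apply, dist_zero_left]
  exact lt_of_mul_lt_mul_left (hle.trans_lt hx) hx0.le

lemma neg_le_deriv_coeff_mul_add_at_slope_max (S : IsFrontSolution c β u w M₁ M₂) (hM₁ : 0 < M₁)
    {t x : ℝ} (ht : 0 ≤ t) (hmax : ∀ y, w t y ≤ w t x) :
    -(8 * M₁ ^ 3) ≤ deriv c x * halfLaplacian (u t) x + c x * halfLaplacian (w t) x := by
  have hA' : 0 ≤ halfLaplacian (w t) x := halfLaplacian_nonneg_of_forall_le hmax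
  have hA := abs_halfLaplacian_le_of_deriv_max (S.hasDerivAt_slope ht) (S.abs_le_one ht)
    (S.boundedC11 ht) (boundedC11_schwartz (w t)) hmax (show 0 < (M₁ ^ 2)⁻¹ by positivity)
  obtain ⟨hc, -, hc'⟩ := S.coeff_bound x
  have hle : |deriv c x * halfLaplacian (u t) x| ≤ c x * halfLaplacian (w t) x + 8 * M₁ ^ 3 := by
    rw [abs_mul]
    calc |deriv c x| * |halfLaplacian (u t) x|
        ≤ M₁ * ((M₁ ^ 2)⁻¹ * halfLaplacian (w t) x + 8 * 1 / (M₁ ^ 2)⁻¹) := by gcongr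
      _ = M₁⁻¹ * halfLaplacian (w t) x + 8 * M₁ ^ 3 := by field_simp
      _ ≤ c x * halfLaplacian (w t) x + 8 * M₁ ^ 3 := by gcongr
  linarith [(abs_le.1 hle).1]

/-- Where the slope is positive the equation expresses the drift as `-(∂ₜu / ∂ₓu + c A₀[u])`. This
is differentiable, with derivative bounded by the Lipschitz constant of the drift. -/
lemma exists_hasDerivAt_slope_at_max (S : IsFrontSolution c β u w M₁ M₂) {t x : ℝ} (ht : 0 < t)
    (hpos : 0 < w t x) (hmax : ∀ y, w t y ≤ w t x) :
    ∃ d, HasDerivAt (fun s => w s x) d t ∧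
      d + w t x * (deriv c x * halfLaplacian (u t) x + c x * halfLaplacian (w t) x)
        ≤ M₂ * w t x := by
  obtain ⟨d, hdt, hdx⟩ := exists_hasDerivAt_mixed (S.contDiffAt ht x)
  refine ⟨d, hdt.congr_of_eventuallyEq ?_, ?_⟩
  · filter_upwards [Ioi_mem_nhds ht] with s hs
    exact S.slope_eq s x (le_of_lt hs)
  have hw : HasDerivAt (w t) 0 x :=
    IsLocalMax.deriv_eq_zero (.of_forall hmax) ▸ (w t).hasDerivAt x
  have hA := hasDerivAt_halfLaplacian (S.hasDerivAt_slope ht.le) (S.boundedC11 ht.le)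
    (boundedC11_schwartz (w t)) x
  have hdrift : (fun y => Bop β y (u t)) =ᶠ[𝓝 x] fun y =>
      -(deriv (fun s => u s y) t / w t y + c y * halfLaplacian (u t) y) := by
    filter_upwards [(w t).continuous.continuousAt.eventually (Ioi_mem_nhds hpos)] with y hy
    have hy0 : w t y ≠ 0 := ne_of_gt hy
    rw [S.deriv_time_eq ht y]
    field_simp
    ring
  have hB := (((hdx.div hw hpos.ne').add
    ((S.coeff_differentiable x).hasDerivAt.mul hA)).neg.congr_of_eventuallyEq hdrift).le_of_lip'
    S.kernel_bound.nonneg (.of_forall fun y => S.abs_drift_sub_le ht.le y x)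
  rw [norm_neg, mul_zero, sub_zero, pow_two, mul_div_mul_right _ _ hpos.ne'] at hB
  have hle := mul_le_mul_of_nonneg_right ((le_abs_self _).trans hB) hpos.le
  rwa [add_mul, div_mul_cancel₀ _ hpos.ne', mul_comm _ (w t x)] at hle

lemma abs_slope_le (S : IsFrontSolution c β u w M₁ M₂) (hM₁ : 0 < M₁) {T m : ℝ}
    (h₀ : ∀ x, |w 0 x| ≤ m) {t : ℝ} (ht : t ∈ Icc 0 T) (x : ℝ) :
    |w t x| ≤ Real.exp ((8 * M₁ ^ 3 + M₂) * t) * m := by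
  refine abs_le_exp_mul_of_deriv_mul_le_at_max (f := fun t x => w t x)
    S.continuous_uncurry_slope.continuousOn (S.tendstoUniformlyOn_slope_cocompact T) ?_ h₀ ht x
  intro t ht x hne hmax
  have hpos : 0 < w t x := (S.slope_nonneg ht.1.le x).lt_of_ne' hne
  have hmax' : ∀ y, w t y ≤ w t x := fun y =>
    (le_abs_self _).trans ((hmax y).trans_eq (abs_of_pos hpos))
  obtain ⟨d, hd, hle⟩ := S.exists_hasDerivAt_slope_at_max ht.1 hpos hmax'
  have hcoeff := S.neg_le_deriv_coeff_mul_add_at_slope_max hM₁ ht.1.le hmax'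
  refine ⟨d, hd, ?_⟩
  rw [pow_two, ← mul_assoc]
  refine mul_le_mul_of_nonneg_right ?_ hpos.le
  linarith [mul_le_mul_of_nonneg_left hcoeff hpos.le]

lemma tendstoUniformlyOn_atTop (S : IsFrontSolution c β u w M₁ M₂) (T : ℝ) :
    TendstoUniformlyOn (fun x t => u t x) (fun _ => 1) atTop (Icc 0 T) :=
  Monotone.tendstoUniformlyOn_of_forall_tendsto isCompact_Icc (S.continuousOn_time T)
    (fun t ht => S.monotone t ht.1) continuousOn_const fun t ht => S.tendsto_atTop t ht.1

lemma tendstoUniformlyOn_atBot (S : IsFrontSolution c β u w M₁ M₂) (T : ℝ) :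
    TendstoUniformlyOn (fun x t => u t x) (fun _ => 0) atBot (Icc 0 T) :=
  Antitone.tendstoUniformlyOn_of_forall_tendsto (ι := ℝᵒᵈ) isCompact_Icc (S.continuousOn_time T)
    (fun t ht => (S.monotone t ht.1).dual_left) continuousOn_const
    fun t ht => S.tendsto_atBot t ht.1

lemma tendstoUniformlyOn_shift_sub_cocompact (S : IsFrontSolution c β u w M₁ M₂) (T : ℝ) {h : ℝ}
    (hh : 0 ≤ h) :
    TendstoUniformlyOn (fun x t => u (t + h) x - u t x) 0 (cocompact ℝ) (Icc 0 T) := by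
  have hshift : ∀ {l : Filter ℝ} {a : ℝ},
      (∀ T, TendstoUniformlyOn (fun x t => u t x) (fun _ => a) l (Icc 0 T)) →
      TendstoUniformlyOn (fun x t => u (t + h) x - u t x) 0 l (Icc 0 T) := by
    intro l a hl
    have hadd := ((hl (T + h)).comp (· + h)).mono (s' := Icc 0 T)
      fun t ht => ⟨add_nonneg ht.1 hh, add_le_add_left ht.2 h⟩
    exact (hadd.sub (hl T)).congr_right fun t _ => sub_self a
  rw [cocompact_eq_atBot_atTop, tendstoUniformlyOn_iff_tendsto, sup_prod, tendsto_sup]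
  exact ⟨tendstoUniformlyOn_iff_tendsto.1 (hshift S.tendstoUniformlyOn_atBot),
    tendstoUniformlyOn_iff_tendsto.1 (hshift S.tendstoUniformlyOn_atTop)⟩

lemma deriv_time_sub_mul_le_at_max (S : IsFrontSolution c β u w M₁ M₂) (hM₁ : 0 < M₁)
    {s t x : ℝ} (hs : 0 < s) (ht : 0 < t) (hmax : ∀ y, |u s y - u t y| ≤ |u s x - u t x|) :
    (deriv (fun r => u r x) s - deriv (fun r => u r x) t) * (u s x - u t x)
      ≤ M₂ * w t x * (u s x - u t x) ^ 2 := by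
  set D : ℝ → ℝ := fun y => u s y - u t y with hD
  have hslope : w s x = w t x := sub_eq_zero.1 <| hasDerivAt_eq_zero_of_forall_abs_le
    ((S.hasDerivAt_slope hs.le x).sub (S.hasDerivAt_slope ht.le x)) hmax
  have hu : BoundedC11 (u s) := S.boundedC11 hs.le
  have hu' : BoundedC11 (u t) := S.boundedC11 ht.le
  have hDA : 0 ≤ c x * (D x * halfLaplacian D x) :=
    mul_nonneg (S.coeff_pos hM₁ x).le (mul_halfLaplacian_nonneg_of_forall_abs_le hmax)
  have hDB : -(D x * Bop β x D) ≤ M₂ * D x ^ 2 := by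
    calc -(D x * Bop β x D) ≤ |D x| * |Bop β x D| := (neg_le_abs _).trans_eq (abs_mul _ _)
      _ ≤ |D x| * (M₂ * |D x|) :=
        mul_le_mul_of_nonneg_left (S.kernel_bound.abs_bop_le hmax x) (abs_nonneg _)
      _ = M₂ * D x ^ 2 := by rw [mul_left_comm, abs_mul_abs_self, pow_two]
  calc (deriv (fun r => u r x) s - deriv (fun r => u r x) t) * D x
      = w t x * (-(D x * Bop β x D) - c x * (D x * halfLaplacian D x)) := by
        rw [S.deriv_time_eq hs, S.deriv_time_eq ht, hslope, hD, halfLaplacian_sub hu hu',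
          S.kernel_bound.bop_sub hu.continuous.aestronglyMeasurable
            hu'.continuous.aestronglyMeasurable (S.abs_le_one hs.le) (S.abs_le_one ht.le)]
        ring
    _ ≤ w t x * (M₂ * D x ^ 2) :=
        mul_le_mul_of_nonneg_left (by linarith) (S.slope_nonneg ht.le x)
    _ = M₂ * w t x * D x ^ 2 := by ring

lemma abs_shift_sub_le (S : IsFrontSolution c β u w M₁ M₂) (hM₁ : 0 < M₁) {T G m h : ℝ}
    (hG : ∀ t ∈ Icc 0 T, ∀ x, |w t x| ≤ G) (hh : 0 ≤ h) (h₀ : ∀ x, |u h x - u 0 x| ≤ m) {t : ℝ}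
    (ht : t ∈ Icc 0 T) (x : ℝ) : |u (t + h) x - u t x| ≤ Real.exp (M₂ * G * t) * m := by
  have hM₂ : 0 ≤ M₂ := S.kernel_bound.nonneg
  refine abs_le_exp_mul_of_deriv_mul_le_at_max (f := fun t x => u (t + h) x - u t x) ?_
    (S.tendstoUniformlyOn_shift_sub_cocompact T hh) ?_ (by simpa using h₀) ht x
  · have hu := S.contDiffOn.continuousOn
    refine ContinuousOn.sub ?_ (hu.mono (prod_mono_left Icc_subset_Ici_self))
    exact hu.comp (f := fun p : ℝ × ℝ => (p.1 + h, p.2)) (by fun_prop)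
      fun p hp => ⟨add_nonneg hp.1.1 hh, mem_univ _⟩
  · intro t ht x _ hmax
    have hth : 0 < t + h := add_pos_of_pos_of_nonneg ht.1 hh
    refine ⟨_, ((S.differentiableAt_time hth x).hasDerivAt.comp_add_const t h).sub
      (S.differentiableAt_time ht.1 x).hasDerivAt, ?_⟩
    refine (S.deriv_time_sub_mul_le_at_max hM₁ hth ht.1 hmax).trans ?_
    have hw : w t x ≤ G := (le_abs_self _).trans (hG t (Ioc_subset_Icc_self ht) x)
    gcongr

lemma abs_deriv_time_le (S : IsFrontSolution c β u w M₁ M₂) (hM₁ : 0 < M₁) {G A t x : ℝ}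
    (ht : 0 < t) (hw : |w t x| ≤ G) (hA : |halfLaplacian (u t) x| ≤ A) :
    |deriv (fun s => u s x) t| ≤ G * (M₁ * A + M₂) := by
  have hdrift : |Bop β x (u t)| ≤ M₂ := by
    simpa using S.kernel_bound.abs_bop_le (S.abs_le_one ht.le) x
  have hflux : |c x * halfLaplacian (u t) x| ≤ M₁ * A := by
    rw [abs_mul, abs_of_pos (S.coeff_pos hM₁ x)]
    exact mul_le_mul (S.coeff_bound x).2.1 hA (abs_nonneg _) hM₁.le
  rw [S.deriv_time_eq ht, abs_neg, abs_mul]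
  exact mul_le_mul hw ((abs_add_le _ _).trans (add_le_add hflux hdrift)) (abs_nonneg _)
    ((abs_nonneg _).trans hw)

lemma eventually_abs_slope_sub_initial_le (S : IsFrontSolution c β u w M₁ M₂) :
    ∀ᶠ t in 𝓝 0, ∀ x y, |(w t - w 0) x - (w t - w 0) y| ≤ |x - y| := by
  have hcont : Continuous fun t => SchwartzMap.seminorm ℝ 0 0
      (SchwartzMap.derivCLM ℝ ℝ (w t - w 0)) :=
    (continuous_schwartz_seminorm 0).comp ((SchwartzMap.derivCLM ℝ ℝ).continuous.comp
      (S.continuous_slope.sub continuous_const))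
  filter_upwards [hcont.tendsto' 0 0 (by simp) |>.eventually (Iic_mem_nhds one_pos)] with t ht x y
  exact (abs_schwartz_sub_le (w t - w 0) x y).trans (mul_le_of_le_one_left (abs_nonneg _) ht)

/-- `u(t) = u(0) + (u(t) - u(0))`, where the first summand has the regularity of the initial
condition and the slope of the second has Lipschitz constant at most `1`. -/
lemma eventually_abs_halfLaplacian_le (S : IsFrontSolution c β u w M₁ M₂) {H α : ℝ} (hα : 0 < α)
    (hw : ∀ x y, |w 0 x - w 0 y| ≤ H * |x - y| ^ α) :
    ∀ᶠ t in 𝓝[>] 0, ∀ x, |halfLaplacian (u t) x| ≤ 2 ^ α * H / α + 14 := by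
  filter_upwards [nhdsWithin_le_nhds S.eventually_abs_slope_sub_initial_le,
    self_mem_nhdsWithin] with t hlip ht x
  have hu := S.boundedC11 (le_of_lt ht)
  have hu₀ := S.boundedC11 le_rfl
  have hd : ∀ y, HasDerivAt (fun y => u t y - u 0 y) ((w t - w 0) y) y := fun y =>
    (S.hasDerivAt_slope (le_of_lt ht) y).sub (S.hasDerivAt_slope le_rfl y)
  have hM : ∀ y, |u t y - u 0 y| ≤ 2 := fun y => (abs_sub _ _).trans <| by
    linarith [S.abs_le_one (le_of_lt ht) y, S.abs_le_one le_rfl y]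
  have hinit := abs_halfLaplacian_le_of_holder hα (S.hasDerivAt_slope le_rfl) hu₀
    (S.abs_le_one le_rfl) hw x
  have hdiff := abs_halfLaplacian_le_of_holder one_pos hd
    (boundedC11_of_hasDerivAt_schwartz _ hd hM) hM (H := 1) (by simpa using hlip) x
  rw [halfLaplacian_sub hu hu₀] at hdiff
  have hadd := abs_add_le (halfLaplacian (u t) x - halfLaplacian (u 0) x) (halfLaplacian (u 0) x)
  rw [sub_add_cancel] at hadd
  norm_num at hdiff
  linarith

lemma eventually_abs_sub_initial_le (S : IsFrontSolution c β u w M₁ M₂) {C : ℝ}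
    (hC : ∀ᶠ t in 𝓝[>] 0, ∀ x, |deriv (fun s => u s x) t| ≤ C) :
    ∀ᶠ h in 𝓝[>] 0, ∀ x, |u h x - u 0 x| ≤ C * h := by
  obtain ⟨δ, hδ, hsub⟩ := mem_nhdsGT_iff_exists_Ioo_subset.1 hC
  filter_upwards [Ioo_mem_nhdsGT hδ] with h hh x
  obtain ⟨s, hs, hslope⟩ := exists_hasDerivAt_eq_slope (fun s => u s x) (deriv fun s => u s x)
    hh.1 (S.continuousOn_time h x) fun s hs => (S.differentiableAt_time hs.1 x).hasDerivAt
  have hle := hsub ⟨hs.1, hs.2.trans hh.2⟩ x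
  rwa [hslope, sub_zero, abs_div, abs_of_pos hh.1, div_le_iff₀ hh.1] at hle

end IsFrontSolution

theorem time_derivative_bound_general (T α M₁ M₂ M₃ : ℝ) (hα : 0 < α) (hM₁ : 0 < M₁)
    (hM₂ : 0 < M₂) (hM₃ : 0 < M₃) :
    ∃ C : ℝ, 0 < C ∧
      ∀ (c : ℝ → ℝ) (β u : ℝ → ℝ → ℝ) (w : ℝ → 𝓢(ℝ, ℝ)), IsFrontSolution c β u w M₁ M₂ →
        (∀ x, |w 0 x| ≤ M₃) → (∀ x y, |w 0 x - w 0 y| ≤ M₃ * |x - y| ^ α) →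
        ∀ t x, 0 ≤ t → t ≤ T → |deriv (fun s => u s x) t| ≤ C := by
  set G := Real.exp ((8 * M₁ ^ 3 + M₂) * (T + 1)) * M₃
  set C₀ := G * (M₁ * (2 ^ α * M₃ / α + 14) + M₂)
  refine ⟨Real.exp (M₂ * G * T) * C₀, by positivity, fun c β u w S hw₀ hw₀' t x ht htT => ?_⟩
  have hG : ∀ s ∈ Icc 0 (T + 1), ∀ y, |w s y| ≤ G := fun s hs y =>
    (S.abs_slope_le hM₁ hw₀ hs y).trans <| by
      unfold G
      gcongr
      exact hs.2
  have hderiv : ∀ᶠ s in 𝓝[>] 0, ∀ y, |deriv (fun r => u r y) s| ≤ C₀ := by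
    filter_upwards [S.eventually_abs_halfLaplacian_le hα hw₀',
      Ioo_mem_nhdsGT (show 0 < T + 1 by linarith)] with s hA hs y
    exact S.abs_deriv_time_le hM₁ hs.1 (hG s (Ioo_subset_Icc_self hs) y) (hA y)
  refine abs_deriv_le_of_eventually_abs_sub_le (by positivity) ?_
  filter_upwards [S.eventually_abs_sub_initial_le hderiv, self_mem_nhdsWithin] with h hinit hh
  have hh' : 0 ≤ h := le_of_lt hh
  calc |u (t + h) x - u t x| ≤ Real.exp (M₂ * G * t) * (C₀ * h) :=
        S.abs_shift_sub_le hM₁ (fun s hs => hG s ⟨hs.1, by linarith [hs.2]⟩) hh' hinit ⟨ht, htT⟩ x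
    _ ≤ Real.exp (M₂ * G * T) * (C₀ * h) := by gcongr
    _ = Real.exp (M₂ * G * T) * C₀ * h := by ring

/-- **Uniform bound on the time derivative of smooth solutions of**
`∂ₜu + c(x)∂ₓu·A₀[u] + B(x;u)∂ₓu = 0`, depending only on `T`, `α`, the bounds on the
coefficients, and the `C^{1,α}` norm of the initial condition. -/
theorem time_derivative_bound (T α M₁ M₂ M₃ : ℝ) (hT : 0 < T) (hα : 0 < α) (hα1 : α < 1)
    (hM₁ : 0 < M₁) (hM₂ : 0 < M₂) (hM₃ : 0 < M₃) :
    ∃ C : ℝ, 0 < C ∧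
      ∀ (c : ℝ → ℝ) (β : ℝ → ℝ → ℝ) (u : ℝ → ℝ → ℝ),
        ContDiff ℝ (⊤ : ℕ∞) c →
        (∀ x, M₁⁻¹ ≤ c x ∧ c x ≤ M₁ ∧ |deriv c x| ≤ M₁) →
        ContDiff ℝ (⊤ : ℕ∞) (Function.uncurry β) →
        (∀ x : ℝ,
          Integrable (fun y => |β x y| + |deriv (fun z => β z y) x|
            + |deriv (fun w => deriv (fun z => β z y) w) x|) ∧
          (∫ y : ℝ, |β x y| + |deriv (fun z => β z y) x|
            + |deriv (fun w => deriv (fun z => β z y) w) x|) ≤ M₂) →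
        (∀ x y : ℝ,
          (∃ l : ℝ, Tendsto (fun δ => Apos δ (fun z => β z y) x) (𝓝[>] (0 : ℝ)) (𝓝 l)) ∧
          (∃ l : ℝ, Tendsto (fun δ => Apos δ (fun z => deriv (fun w => β w y) z) x)
            (𝓝[>] (0 : ℝ)) (𝓝 l)) ∧
          (∃ l : ℝ, Tendsto
            (fun δ => Apos δ (fun z => deriv (fun w' => deriv (fun w => β w y) w') z) x)
            (𝓝[>] (0 : ℝ)) (𝓝 l))) →
        (Integrable (fun p : ℝ × ℝ =>
          |A0 (fun z => β z p.2) p.1|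
            + |A0 (fun z => deriv (fun w => β w p.2) z) p.1|
            + |A0 (fun z => deriv (fun w' => deriv (fun w => β w p.2) w') z) p.1|)
          (volume.prod volume)) →
        ((∫ p : ℝ × ℝ,
          (|A0 (fun z => β z p.2) p.1|
            + |A0 (fun z => deriv (fun w => β w p.2) z) p.1|
            + |A0 (fun z => deriv (fun w' => deriv (fun w => β w p.2) w') z) p.1|)
          ∂(volume.prod volume)) ≤ M₂) →
        ContDiffOn ℝ (⊤ : ℕ∞) (Function.uncurry u) (Ici 0 ×ˢ univ) →
        (∀ t, 0 ≤ t → Monotone (u t)) →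
        (∃ M : ℝ, ∀ t x, 0 ≤ t → |u t x| ≤ M) →
        (∀ t, 0 ≤ t → Tendsto (u t) atBot (𝓝 0)) →
        (∀ t, 0 ≤ t → Tendsto (u t) atTop (𝓝 1)) →
        (∃ w : ℝ → SchwartzMap ℝ ℝ, Continuous w ∧
          ∀ t x, 0 ≤ t → w t x = deriv (fun y => u t y) x) →
        (∃ a₁ a₂ a₃ : ℝ, (∀ x, |u 0 x| ≤ a₁) ∧ (∀ x, |deriv (fun y => u 0 y) x| ≤ a₂) ∧
          (∀ x y, |deriv (fun z => u 0 z) x - deriv (fun z => u 0 z) y| ≤ a₃ * |x - y| ^ α) ∧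
          a₁ + a₂ + a₃ ≤ M₃) →
        (∀ t x, 0 < t →
          ∃ l : ℝ, Tendsto (fun δ => Apos δ (u t) x) (𝓝[>] (0 : ℝ)) (𝓝 l)) →
        (∀ t x, 0 < t →
          deriv (fun s => u s x) t
            + c x * deriv (fun y => u t y) x * A0 (u t) x
            + Bop β x (u t) * deriv (fun y => u t y) x = 0) →
        ∀ t x, 0 ≤ t → t ≤ T → |deriv (fun s => u s x) t| ≤ C := by
  obtain ⟨C, hC, hbound⟩ := time_derivative_bound_general T α M₁ M₂ M₃ hα hM₁ hM₂ hM₃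
  refine ⟨C, hC, fun c β u hc hcb hβ hβi _ _ _ hu hmono _ hbot htop hslope hinit _ heq => ?_⟩
  obtain ⟨w, hw, hwu⟩ := hslope
  obtain ⟨a₁, a₂, a₃, ha₁, ha₂, ha₃, hsum⟩ := hinit
  have ha₁₀ := (abs_nonneg _).trans (ha₁ 0)
  have ha₂₀ := (abs_nonneg _).trans (ha₂ 0)
  have ha₃₀ : 0 ≤ a₃ := by simpa using (abs_nonneg _).trans (ha₃ 1 0)
  have htwo : (2 : WithTop ℕ∞) ≤ (⊤ : ℕ∞) := WithTop.coe_le_coe.2 le_top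
  have hkernel := isL1BoundedKernel_and_deriv_of_integral_sum_le hβ.continuous hβi
  simp only [← hwu 0 _ le_rfl] at ha₂ ha₃
  exact hbound c β u w ⟨hc.differentiable (by simp), hcb, hβ.of_le (one_le_two.trans htwo),
    hkernel.1, hkernel.2, hu.of_le htwo, hmono, hbot, htop, hw, hwu, heq⟩
    (fun x => (ha₂ x).trans (by linarith))
    fun x y => (ha₃ x y).trans (by gcongr; linarith)
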